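/- Hölder bound for the chart commutator operator: let d ≥ 3, γ ∈ (0,1), μ ≥ 1, L > 0, H > 0, r₀ > 0, a₀ ∈ ℝ^{d-1}, and let Z : B(a₀, 6r₀) ⊂ ℝ^{d-1} → ℝ^d be continuously differentiable with (1/μ)|a-b| ≤ |Z(a)-Z(b)| ≤ L|a-b| for all a,b, and ‖DZ‖_γ ≤ H. Fix 1 ≤ j ≤ d-1 and define the commutator kernel C(a,b) = (2-d) (Z(a)-Z(b)) · (∂_j Z(a) - ∂_j Z(b)) / |Z(a)-Z(b)|^d. Then there is a constant C₀, depending only on d, γ, μ, L, H and r₀, such that for every γ-Hölder function f supported in B(a₀, 3r₀), the function Cf(a) = ∫_{B(a₀,6r₀)} C(a,b) f(b) db (an absolutely convergent integral) satisfies ‖Cf‖_{γ, B(a₀,3r₀)} ≤ C₀ (‖f‖_{∞} + ‖f‖_{γ}). -/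

import Mathlib

open MeasureTheory Metric Set
open scoped RealInnerProductSpace

/-!
Split the integrals for `a` and `a'` at `|a' - b| = 2 |a - a'|`. Near `a'` the kernel is
`O(|a - b| ^ (γ - n))`, `n = d - 1`, hence weakly singular, and both integrals are
`O(|a - a'| ^ γ)`. Away from `a'`, with `k u = u / |u| ^ d` and `T = ∂_j Z`, the difference of the
kernels is `⟪k (Z a - Z b) - k (Z a' - Z b), T a - T b⟫ + ⟪k (Z a' - Z b), T a - T a'⟫`. The first
term is `O(|a - a'| |a' - b| ^ (γ - 1 - n))`, integrable at infinity because `γ < 1`. The second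
pairs the increment `T a - T a'` with a truncated singular integral, which is bounded uniformly in
the truncation: replacing `Z a' - Z b` by `DZ(a') (a' - b)` and `f b` by `f a'` costs only
`O(|a' - b| ^ (γ - n))`, and what remains is odd in `a' - b`, so it integrates to zero over
annuli.
-/

section RadialPowers

lemma norm_sub_preimage_Iio {E : Type*} [SeminormedAddCommGroup E] (a : E) (R : ℝ) :
    (fun b => ‖a - b‖) ⁻¹' Iio R = ball a R := by
  ext b
  simp [dist_eq_norm']

lemma norm_sub_preimage_Ici {E : Type*} [SeminormedAddCommGroup E] (a : E) (R : ℝ) :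
    (fun b => ‖a - b‖) ⁻¹' Ici R = (ball a R)ᶜ := by
  ext b
  simp [dist_eq_norm']

lemma pow_pred_smul_indicator_rpow {n : ℕ} {s : ℝ} {S : Set ℝ}
    (hn : 1 ≤ n) {t : ℝ} (ht : t ∈ Ioi 0) :
    t ^ (n - 1) • S.indicator (fun x => x ^ (s - n)) t = S.indicator (fun x => x ^ (s - 1)) t := by
  by_cases htS : t ∈ S
  · rw [indicator_of_mem htS, indicator_of_mem htS, smul_eq_mul, ← Real.rpow_natCast,
      ← Real.rpow_add ht, Nat.cast_sub hn]
    congr 1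
    push_cast
    ring
  · rw [indicator_of_notMem htS, indicator_of_notMem htS, smul_zero]

variable {E : Type*} [NormedAddCommGroup E] [NormedSpace ℝ E] [FiniteDimensional ℝ E]
  [MeasurableSpace E] [BorelSpace E] [Nontrivial E] (ν : Measure E) [ν.IsAddHaarMeasure]
  {n : ℕ} {s : ℝ} {S : Set ℝ}

lemma integrableOn_norm_sub_rpow_iff (hn : Module.finrank ℝ E = n) (hS : MeasurableSet S) (a : E) :
    IntegrableOn (fun b => ‖a - b‖ ^ (s - n)) ((fun b => ‖a - b‖) ⁻¹' S) ν ↔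
      IntegrableOn (fun t => t ^ (s - 1)) (S ∩ Ioi 0) := by
  have hn1 : 1 ≤ n := hn ▸ Module.finrank_pos
  rw [← integrable_indicator_iff (hS.preimage (by fun_prop))]
  change Integrable (fun b => S.indicator (fun t => t ^ (s - n)) ‖a - b‖) ν ↔ _
  rw [integrable_comp_sub_left (fun x => S.indicator (fun t => t ^ (s - n)) ‖x‖) a,
    integrable_fun_norm_addHaar ν (f := S.indicator fun t => t ^ (s - n)), hn,
    integrableOn_congr_fun (fun t => pow_pred_smul_indicator_rpow hn1) measurableSet_Ioi,
    IntegrableOn, integrable_indicator_iff hS, IntegrableOn, Measure.restrict_restrict hS,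
    IntegrableOn]

lemma setIntegral_norm_sub_rpow (hn : Module.finrank ℝ E = n) (hS : MeasurableSet S) (a : E) :
    ∫ b in (fun b => ‖a - b‖) ⁻¹' S, ‖a - b‖ ^ (s - n) ∂ν =
      ν.toSphere.real univ * ∫ t in S ∩ Ioi 0, t ^ (s - 1) := by
  have hn1 : 1 ≤ n := hn ▸ Module.finrank_pos
  rw [← integral_indicator (hS.preimage (by fun_prop))]
  change ∫ b, S.indicator (fun t => t ^ (s - n)) ‖a - b‖ ∂ν = _
  rw [integral_sub_left_eq_self (fun x => S.indicator (fun t => t ^ (s - n)) ‖x‖) ν a,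
    integral_fun_norm_addHaar ν (S.indicator fun t => t ^ (s - n)), hn,
    setIntegral_congr_fun measurableSet_Ioi fun t => pow_pred_smul_indicator_rpow hn1,
    setIntegral_indicator hS, inter_comm, Measure.toSphere_real_apply_univ, hn, nsmul_eq_mul,
    smul_eq_mul, mul_assoc]

lemma integrableOn_ball_norm_sub_rpow (hn : Module.finrank ℝ E = n) (hs : 0 < s) {R : ℝ}
    (hR : 0 < R) (a : E) : IntegrableOn (fun b => ‖a - b‖ ^ (s - n)) (ball a R) ν := by
  rw [← norm_sub_preimage_Iio, integrableOn_norm_sub_rpow_iff ν hn measurableSet_Iio, inter_comm,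
    Ioi_inter_Iio, intervalIntegral.integrableOn_Ioo_rpow_iff hR]
  linarith

lemma setIntegral_ball_norm_sub_rpow (hn : Module.finrank ℝ E = n) (hs : 0 < s) {R : ℝ}
    (hR : 0 < R) (a : E) :
    ∫ b in ball a R, ‖a - b‖ ^ (s - n) ∂ν = ν.toSphere.real univ * (R ^ s / s) := by
  rw [← norm_sub_preimage_Iio, setIntegral_norm_sub_rpow ν hn measurableSet_Iio, inter_comm,
    Ioi_inter_Iio, ← integral_Ioc_eq_integral_Ioo, ← intervalIntegral.integral_of_le hR.le,
    integral_rpow (Or.inl (by linarith)), sub_add_cancel, Real.zero_rpow hs.ne', sub_zero]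

lemma integrableOn_compl_ball_norm_sub_rpow (hn : Module.finrank ℝ E = n) (hs : s < 0) {R : ℝ}
    (hR : 0 < R) (a : E) : IntegrableOn (fun b => ‖a - b‖ ^ (s - n)) (ball a R)ᶜ ν := by
  rw [← norm_sub_preimage_Ici, integrableOn_norm_sub_rpow_iff ν hn measurableSet_Ici,
    inter_eq_left.2 (Ici_subset_Ioi.2 hR), integrableOn_Ici_iff_integrableOn_Ioi]
  exact integrableOn_Ioi_rpow_of_lt (by linarith) hR

lemma setIntegral_compl_ball_norm_sub_rpow (hn : Module.finrank ℝ E = n) (hs : s < 0) {R : ℝ}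
    (hR : 0 < R) (a : E) :
    ∫ b in (ball a R)ᶜ, ‖a - b‖ ^ (s - n) ∂ν = ν.toSphere.real univ * (R ^ s / -s) := by
  rw [← norm_sub_preimage_Ici, setIntegral_norm_sub_rpow ν hn measurableSet_Ici,
    inter_eq_left.2 (Ici_subset_Ioi.2 hR), integral_Ici_eq_integral_Ioi,
    integral_Ioi_rpow_of_lt (by linarith) hR, sub_add_cancel, neg_div, div_neg]

end RadialPowers

section IntegralBounds

lemma norm_setIntegral_le_setIntegral_of_subset {X G : Type*} [MeasurableSpace X]
    {ν : Measure X} [NormedAddCommGroup G] [NormedSpace ℝ G] {S T : Set X} {g : X → G} {h : X → ℝ}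
    (hS : MeasurableSet S) (hST : S ⊆ T) (hh : IntegrableOn h T ν) (hh0 : ∀ x, 0 ≤ h x)
    (hgh : ∀ x ∈ S, ‖g x‖ ≤ h x) : ‖∫ x in S, g x ∂ν‖ ≤ ∫ x in T, h x ∂ν :=
  (norm_integral_le_of_norm_le (hh.mono_set hST) (ae_restrict_of_forall_mem hS hgh)).trans
    (setIntegral_mono_set hh (.of_forall hh0) hST.eventuallyLE)

variable {E G : Type*} [NormedAddCommGroup E] [NormedSpace ℝ E] [FiniteDimensional ℝ E]
  [MeasurableSpace E] [BorelSpace E] [NormedAddCommGroup G] [NormedSpace ℝ G]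
  (ν : Measure E) [ν.IsAddHaarMeasure] {n : ℕ} {s M R : ℝ} {a : E} {S : Set E} {g : E → G}

lemma norm_setIntegral_le_of_norm_le_rpow_of_subset_ball [Nontrivial E]
    (hn : Module.finrank ℝ E = n) (hs : 0 < s) (hM : 0 ≤ M) (hR : 0 < R) (hS : MeasurableSet S)
    (hSR : S ⊆ ball a R) (hg : ∀ b ∈ S, ‖g b‖ ≤ M * ‖a - b‖ ^ (s - n)) :
    ‖∫ b in S, g b ∂ν‖ ≤ M * (ν.toSphere.real univ * (R ^ s / s)) := by
  rw [← setIntegral_ball_norm_sub_rpow ν hn hs hR a, ← integral_const_mul]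
  exact norm_setIntegral_le_setIntegral_of_subset hS hSR
    ((integrableOn_ball_norm_sub_rpow ν hn hs hR a).const_mul M) (fun b => by positivity) hg

lemma norm_setIntegral_le_of_norm_le_rpow_of_subset_compl_ball [Nontrivial E]
    (hn : Module.finrank ℝ E = n) (hs : s < 0) (hM : 0 ≤ M) (hR : 0 < R) (hS : MeasurableSet S)
    (hSR : S ⊆ (ball a R)ᶜ) (hg : ∀ b ∈ S, ‖g b‖ ≤ M * ‖a - b‖ ^ (s - n)) :
    ‖∫ b in S, g b ∂ν‖ ≤ M * (ν.toSphere.real univ * (R ^ s / -s)) := by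
  rw [← setIntegral_compl_ball_norm_sub_rpow ν hn hs hR a, ← integral_const_mul]
  exact norm_setIntegral_le_setIntegral_of_subset hS hSR
    ((integrableOn_compl_ball_norm_sub_rpow ν hn hs hR a).const_mul M) (fun b => by positivity) hg

lemma setIntegral_annulus_eq_zero_of_odd (hg : g.Odd) (a : E) (s R : ℝ) :
    ∫ b in ball a R \ ball a s, g (a - b) ∂ν = 0 := by
  set A : Set E := ball 0 R \ ball 0 s
  have hodd : (A.indicator g).Odd := fun x => by
    have hx : -x ∈ A ↔ x ∈ A := by simp [A]
    by_cases hxA : x ∈ A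
    · rw [indicator_of_mem hxA, indicator_of_mem (hx.2 hxA), hg]
    · rw [indicator_of_notMem hxA, indicator_of_notMem (hx.not.2 hxA), neg_zero]
  have htranslate : (ball a R \ ball a s).indicator (fun b => g (a - b)) =
      fun b => A.indicator g (a - b) := by
    ext b
    simp [A, indicator, dist_eq_norm', norm_sub_rev b a]
  rw [← integral_indicator (measurableSet_ball.diff measurableSet_ball), htranslate,
    integral_sub_left_eq_self (A.indicator g) ν a]
  have := IsAddTorsionFree.of_isTorsionFree ℝ G
  exact self_eq_neg.1 (by rw [← integral_neg, ← integral_neg_eq_self]; simp_rw [hodd _])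

end IntegralBounds

section RieszKernel

lemma inv_mul_pow_mul_rpow {c ρ : ℝ} (hρ : 0 < ρ) (n : ℕ) (γ : ℝ) :
    (c * ρ)⁻¹ ^ n * ρ ^ γ = c⁻¹ ^ n * ρ ^ (γ - n) := by
  rw [Real.rpow_sub hρ, Real.rpow_natCast, mul_inv, mul_pow, inv_pow ρ]
  ring

variable {V : Type*} [NormedAddCommGroup V]

section NormedSpace

variable [NormedSpace ℝ V]

/-- The vector Riesz kernel `u / |u| ^ d`, in dimension `d` a multiple of the gradient of the
Newtonian potential. It vanishes at the origin, whatever `d`. -/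
noncomputable def rieszKernel (d : ℕ) (u : V) : V := ‖u‖⁻¹ ^ d • u

lemma rieszKernel_neg (d : ℕ) (u : V) : rieszKernel d (-u) = -rieszKernel d u := by
  simp [rieszKernel]

lemma rieszKernel_succ (d : ℕ) (u : V) :
    rieszKernel (d + 1) u = ‖u‖⁻¹ • rieszKernel d u := by
  rw [rieszKernel, rieszKernel, smul_smul, pow_succ']

lemma norm_rieszKernel_succ (n : ℕ) {u : V} (hu : u ≠ 0) :
    ‖rieszKernel (n + 1) u‖ = ‖u‖⁻¹ ^ n := by
  rw [rieszKernel, norm_smul, norm_pow, norm_inv, norm_norm, pow_succ, mul_assoc,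
    inv_mul_cancel₀ (norm_ne_zero_iff.2 hu), mul_one]

lemma norm_rieszKernel_succ_le (n : ℕ) {m : ℝ} (hm : 0 < m) {u : V} (hu : m ≤ ‖u‖) :
    ‖rieszKernel (n + 1) u‖ ≤ m⁻¹ ^ n := by
  rw [norm_rieszKernel_succ n (norm_pos_iff.1 (hm.trans_le hu))]
  gcongr

lemma norm_inv_norm_sub_inv_norm_smul_le {u v : V} (hu : u ≠ 0) (hv : v ≠ 0) (w : V) :
    ‖(‖u‖⁻¹ - ‖v‖⁻¹) • w‖ ≤ ‖u‖⁻¹ * ‖u - v‖ * (‖v‖⁻¹ * ‖w‖) := by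
  have hu' : 0 < ‖u‖ := norm_pos_iff.2 hu
  have hv' : 0 < ‖v‖ := norm_pos_iff.2 hv
  rw [norm_smul, Real.norm_eq_abs, inv_sub_inv hu'.ne' hv'.ne', abs_div,
    abs_of_pos (mul_pos hu' hv'), div_eq_inv_mul, mul_inv, norm_sub_rev u v]
  calc ‖u‖⁻¹ * ‖v‖⁻¹ * |‖v‖ - ‖u‖| * ‖w‖
      ≤ ‖u‖⁻¹ * ‖v‖⁻¹ * ‖v - u‖ * ‖w‖ := by gcongr; exact abs_norm_sub_norm_le v u
    _ = ‖u‖⁻¹ * ‖v - u‖ * (‖v‖⁻¹ * ‖w‖) := by ring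

lemma norm_rieszKernel_sub_le (d : ℕ) {m : ℝ} (hm : 0 < m) {u v : V} (hu : m ≤ ‖u‖)
    (hv : m ≤ ‖v‖) :
    ‖rieszKernel d u - rieszKernel d v‖ ≤ (d + 1) * m⁻¹ ^ d * ‖u - v‖ := by
  have hu0 : u ≠ 0 := norm_pos_iff.1 (hm.trans_le hu)
  have hv0 : v ≠ 0 := norm_pos_iff.1 (hm.trans_le hv)
  induction d with
  | zero => simp [rieszKernel]
  | succ d ih =>
    have hsplit : rieszKernel (d + 1) u - rieszKernel (d + 1) v =
        ‖u‖⁻¹ • (rieszKernel d u - rieszKernel d v) + (‖u‖⁻¹ - ‖v‖⁻¹) • rieszKernel d v := by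
      rw [rieszKernel_succ, rieszKernel_succ, smul_sub, sub_smul]
      abel
    have hsize : ‖v‖⁻¹ * ‖rieszKernel d v‖ ≤ m⁻¹ ^ d := by
      rw [← norm_norm v, ← norm_inv, ← norm_smul, ← rieszKernel_succ]
      exact norm_rieszKernel_succ_le d hm hv
    calc ‖rieszKernel (d + 1) u - rieszKernel (d + 1) v‖
        ≤ ‖u‖⁻¹ * ‖rieszKernel d u - rieszKernel d v‖ +
            ‖u‖⁻¹ * ‖u - v‖ * (‖v‖⁻¹ * ‖rieszKernel d v‖) := by
          rw [hsplit]
          refine norm_add_le_of_le ?_ (norm_inv_norm_sub_inv_norm_smul_le hu0 hv0 _)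
          rw [norm_smul, norm_inv, norm_norm]
      _ ≤ m⁻¹ * ((d + 1) * m⁻¹ ^ d * ‖u - v‖) + m⁻¹ * ‖u - v‖ * m⁻¹ ^ d := by gcongr
      _ = ((d + 1 : ℕ) + 1) * m⁻¹ ^ (d + 1) * ‖u - v‖ := by push_cast; ring

lemma norm_smul_rieszKernel_sub_smul_le {n : ℕ} {c ρ γ H F Hf x y : ℝ} (hc : 0 < c) (hρ : 0 < ρ)
    {u v : V} (hu : c * ρ ≤ ‖u‖) (hv : c * ρ ≤ ‖v‖) (huv : ‖u - v‖ ≤ H * ρ ^ (γ + 1))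
    (hxy : |x - y| ≤ Hf * ρ ^ γ) (hy : |y| ≤ F) :
    ‖x • rieszKernel (n + 1) u - y • rieszKernel (n + 1) v‖ ≤
      (c⁻¹ ^ n * Hf + (n + 2) * c⁻¹ ^ (n + 1) * H * F) * ρ ^ (γ - n) := by
  have hm : 0 < c * ρ := mul_pos hc hρ
  have hsplit : x • rieszKernel (n + 1) u - y • rieszKernel (n + 1) v =
      (x - y) • rieszKernel (n + 1) u + y • (rieszKernel (n + 1) u - rieszKernel (n + 1) v) := by
    rw [smul_sub, sub_smul]
    abel
  have hF : 0 ≤ F := (abs_nonneg y).trans hy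
  calc ‖x • rieszKernel (n + 1) u - y • rieszKernel (n + 1) v‖
      ≤ |x - y| * ‖rieszKernel (n + 1) u‖ +
          |y| * ‖rieszKernel (n + 1) u - rieszKernel (n + 1) v‖ := by
        rw [hsplit]
        refine norm_add_le_of_le ?_ ?_ <;> rw [norm_smul, Real.norm_eq_abs]
    _ ≤ Hf * ρ ^ γ * (c * ρ)⁻¹ ^ n +
          F * (((n + 1 : ℕ) + 1) * (c * ρ)⁻¹ ^ (n + 1) * (H * ρ ^ (γ + 1))) := by
        gcongr
        · exact (abs_nonneg _).trans hxy
        · exact norm_rieszKernel_succ_le n hm hu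
        · exact (norm_rieszKernel_sub_le (n + 1) hm hu hv).trans (by gcongr)
    _ = Hf * ((c * ρ)⁻¹ ^ n * ρ ^ γ) +
          (n + 2) * F * H * ((c * ρ)⁻¹ ^ (n + 1) * ρ ^ (γ + 1)) := by push_cast; ring
    _ = (c⁻¹ ^ n * Hf + (n + 2) * c⁻¹ ^ (n + 1) * H * F) * ρ ^ (γ - n) := by
        have hexp : γ + 1 - (n + 1 : ℕ) = γ - n := by push_cast; ring
        rw [inv_mul_pow_mul_rpow hρ, inv_mul_pow_mul_rpow hρ, hexp]
        ring

end NormedSpace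

variable [InnerProductSpace ℝ V]

lemma abs_inner_rieszKernel_succ_le (n : ℕ) {m : ℝ} (hm : 0 < m) {u : V} (hu : m ≤ ‖u‖) (w : V) :
    |⟪rieszKernel (n + 1) u, w⟫| ≤ m⁻¹ ^ n * ‖w‖ :=
  (abs_real_inner_le_norm _ _).trans (by gcongr; exact norm_rieszKernel_succ_le n hm hu)

end RieszKernel

section Charts

/-- The increments of `T` on `S` are bounded by `K * ‖a - b‖ ^ γ`: the analogue of `HolderOnWith`
with real constant and exponent. -/
def HolderBoundOn {E G : Type*} [Norm E] [Sub E] [Norm G] [Sub G] (K γ : ℝ) (S : Set E)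
    (T : E → G) : Prop :=
  ∀ a ∈ S, ∀ b ∈ S, ‖T a - T b‖ ≤ K * ‖a - b‖ ^ γ

lemma HolderBoundOn.mono {E G : Type*} [Norm E] [Sub E] [Norm G] [Sub G] {K γ : ℝ} {S S' : Set E}
    {T : E → G} (hT : HolderBoundOn K γ S T) (hS : S' ⊆ S) : HolderBoundOn K γ S' T :=
  fun a ha b hb => hT a (hS ha) b (hS hb)

lemma HolderBoundOn.continuousOn {E G : Type*} [SeminormedAddCommGroup E]
    [SeminormedAddCommGroup G] {K γ : ℝ} {S : Set E} {T : E → G} (hγ : 0 < γ)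
    (hT : HolderBoundOn K γ S T) : ContinuousOn T S := fun a ha => by
  have hbound : Filter.Tendsto (fun b => K * ‖b - a‖ ^ γ) (nhdsWithin a S) (nhds 0) := by
    have hcont : Continuous fun b => K * ‖b - a‖ ^ γ :=
      continuous_const.mul (by fun_prop (disch := positivity))
    simpa [hγ.ne'] using hcont.continuousWithinAt.tendsto (x := a) (s := S)
  refine tendsto_iff_norm_sub_tendsto_zero.2 (squeeze_zero'
    (.of_forall fun _ => norm_nonneg _) ?_ hbound)
  filter_upwards [self_mem_nhdsWithin] with b hb using hT b hb a ha

variable {E V : Type*} [NormedAddCommGroup E] [NormedSpace ℝ E] [NormedAddCommGroup V]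
  [NormedSpace ℝ V] {c L H γ : ℝ} {S : Set E} {Z : E → V} {a b : E}

/-- A bi-Lipschitz `C^{1,γ}` chart on `S`: lower and upper Lipschitz constants `c` and `L`, and
Hölder constant `H` for the derivative. -/
structure IsHolderChartOn (c L H γ : ℝ) (S : Set E) (Z : E → V) : Prop where
  differentiableAt : ∀ a ∈ S, DifferentiableAt ℝ Z a
  le_norm_sub : ∀ a ∈ S, ∀ b ∈ S, c * ‖a - b‖ ≤ ‖Z a - Z b‖
  norm_sub_le : ∀ a ∈ S, ∀ b ∈ S, ‖Z a - Z b‖ ≤ L * ‖a - b‖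
  holder_fderiv : HolderBoundOn H γ S (fderiv ℝ Z)

namespace IsHolderChartOn

lemma mono {S' : Set E} (hZ : IsHolderChartOn c L H γ S Z) (hS : S' ⊆ S) :
    IsHolderChartOn c L H γ S' Z where
  differentiableAt a ha := hZ.differentiableAt a (hS ha)
  le_norm_sub a ha b hb := hZ.le_norm_sub a (hS ha) b (hS hb)
  norm_sub_le a ha b hb := hZ.norm_sub_le a (hS ha) b (hS hb)
  holder_fderiv := hZ.holder_fderiv.mono hS

lemma continuousOn (hZ : IsHolderChartOn c L H γ S Z) : ContinuousOn Z S :=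
  fun a ha => (hZ.differentiableAt a ha).continuousAt.continuousWithinAt

lemma holderBoundOn_fderiv_apply (hZ : IsHolderChartOn c L H γ S Z) (v : E) :
    HolderBoundOn (H * ‖v‖) γ S fun a => fderiv ℝ Z a v := fun a ha b hb => by
  rw [← sub_apply, mul_right_comm]
  exact ContinuousLinearMap.le_of_opNorm_le _ (hZ.holder_fderiv a ha b hb) v

lemma norm_sub_sub_fderiv_le (hZ : IsHolderChartOn c L H γ S Z) (hS : Convex ℝ S) (hγ : 0 ≤ γ)
    (hH : 0 ≤ H) (ha : a ∈ S) (hb : b ∈ S) :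
    ‖Z a - Z b - fderiv ℝ Z a (a - b)‖ ≤ H * ‖a - b‖ ^ (γ + 1) := by
  rw [Real.rpow_add_one' (norm_nonneg _) (by linarith), ← mul_assoc]
  refine (hS.inter (convex_closedBall a ‖a - b‖)).norm_image_sub_le_of_norm_hasFDerivWithin_le'
    (f' := fderiv ℝ Z) (fun x hx => (hZ.differentiableAt x hx.1).hasFDerivAt.hasFDerivWithinAt)
    (fun x hx => ?_) ⟨hb, by simp [dist_eq_norm']⟩ ⟨ha, by simp⟩
  refine (hZ.holder_fderiv x hx.1 a ha).trans ?_
  gcongr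
  exact mem_closedBall_iff_norm.1 hx.2

lemma le_norm_fderiv (hZ : IsHolderChartOn c L H γ S Z) (hS : IsOpen S) (ha : a ∈ S) (v : E) :
    c * ‖v‖ ≤ ‖fderiv ℝ Z a v‖ := by
  have hlim := ((hZ.differentiableAt a ha).hasFDerivAt.lim v (c := fun t : ℝ => t)
    (l := Filter.atTop) Filter.tendsto_abs_atTop_atTop).norm
  have hmem : ∀ᶠ t : ℝ in Filter.atTop, a + t⁻¹ • v ∈ S := by
    have hadd := (tendsto_inv_atTop_zero (𝕜 := ℝ)).smul_const v |>.const_add a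
    rw [zero_smul, add_zero] at hadd
    exact hadd.eventually (hS.mem_nhds ha)
  refine ge_of_tendsto hlim ?_
  filter_upwards [hmem, Filter.eventually_gt_atTop 0] with t ht ht0
  have hbound := hZ.le_norm_sub _ ht a ha
  rw [add_sub_cancel_left, norm_smul, norm_inv, Real.norm_of_nonneg ht0.le] at hbound
  rw [norm_smul, Real.norm_of_nonneg ht0.le]
  calc c * ‖v‖ = t * (c * (t⁻¹ * ‖v‖)) := by field_simp
    _ ≤ t * ‖Z (a + t⁻¹ • v) - Z a‖ := by gcongr

end IsHolderChartOn

end Charts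

section CommutatorKernel

/-- The kernel `(Z a - Z b) · (T a - T b) / |Z a - Z b| ^ d` of the commutator of the Riesz
potential with a vector field `T` in the chart `Z`, without the constant `2 - d`. -/
noncomputable def commutatorKernel {X V : Type*} [NormedAddCommGroup V]
    [InnerProductSpace ℝ V] (d : ℕ) (Z T : X → V) (a b : X) : ℝ :=
  ⟪rieszKernel d (Z a - Z b), T a - T b⟫

lemma two_sub_mul_inner_div_norm_pow_mul {X V : Type*} [NormedAddCommGroup V]
    [InnerProductSpace ℝ V] (d : ℕ) (Z T : X → V) (a b : X) (y : ℝ) :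
    (2 - (d : ℝ)) * ⟪Z a - Z b, T a - T b⟫ / ‖Z a - Z b‖ ^ d * y =
      (2 - (d : ℝ)) * (commutatorKernel d Z T a b * y) := by
  rw [commutatorKernel, rieszKernel, real_inner_smul_left, inv_pow]
  ring

lemma commutatorKernel_sub_commutatorKernel {X V : Type*} [NormedAddCommGroup V]
    [InnerProductSpace ℝ V] (d : ℕ) (Z T : X → V) (a a' b : X) :
    commutatorKernel d Z T a b - commutatorKernel d Z T a' b =
      ⟪rieszKernel d (Z a - Z b) - rieszKernel d (Z a' - Z b), T a - T b⟫ +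
        ⟪rieszKernel d (Z a' - Z b), T a - T a'⟫ := by
  simp only [commutatorKernel, inner_sub_left, inner_sub_right]
  ring

variable {E V : Type*} [NormedAddCommGroup E] [NormedAddCommGroup V] [InnerProductSpace ℝ V]
  {n : ℕ} {c L K γ : ℝ} {Z T : E → V} {a a' b : E}

lemma abs_commutatorKernel_le (hc : 0 < c) (hK : 0 ≤ K) (hZ : c * ‖a - b‖ ≤ ‖Z a - Z b‖)
    (hT : ‖T a - T b‖ ≤ K * ‖a - b‖ ^ γ) :
    |commutatorKernel (n + 1) Z T a b| ≤ c⁻¹ ^ n * K * ‖a - b‖ ^ (γ - n) := by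
  rcases eq_or_ne a b with rfl | hab
  · simp only [commutatorKernel, sub_self, inner_zero_right, abs_zero]
    positivity
  have hρ : 0 < ‖a - b‖ := norm_sub_pos_iff.2 hab
  calc |commutatorKernel (n + 1) Z T a b|
      ≤ (c * ‖a - b‖)⁻¹ ^ n * ‖T a - T b‖ :=
        abs_inner_rieszKernel_succ_le n (mul_pos hc hρ) hZ _
    _ ≤ (c * ‖a - b‖)⁻¹ ^ n * (K * ‖a - b‖ ^ γ) := by gcongr
    _ = K * ((c * ‖a - b‖)⁻¹ ^ n * ‖a - b‖ ^ γ) := by ring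
    _ = c⁻¹ ^ n * K * ‖a - b‖ ^ (γ - n) := by rw [inv_mul_pow_mul_rpow hρ]; ring

lemma rpow_le_two_mul_rpow {x y : ℝ} (hx : 0 ≤ x) (hxy : x ≤ 2 * y) (hγ : γ ∈ Icc (0 : ℝ) 1) :
    x ^ γ ≤ 2 * y ^ γ :=
  calc x ^ γ ≤ (2 * y) ^ γ := Real.rpow_le_rpow hx hxy hγ.1
    _ = 2 ^ γ * y ^ γ := Real.mul_rpow zero_le_two (by linarith)
    _ ≤ 2 * y ^ γ := by
      gcongr
      · exact Real.rpow_nonneg (by linarith) γ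
      · exact Real.rpow_le_self_of_one_le one_le_two hγ.2

lemma abs_inner_rieszKernel_sub_le (hc : 0 < c) (hK : 0 ≤ K) (hγ : γ ∈ Icc (0 : ℝ) 1)
    (hZa : c * ‖a - b‖ ≤ ‖Z a - Z b‖) (hZa' : c * ‖a' - b‖ ≤ ‖Z a' - Z b‖)
    (hZ : ‖Z a - Z a'‖ ≤ L * ‖a - a'‖) (hT : ‖T a - T b‖ ≤ K * ‖a - b‖ ^ γ)
    (haa' : a ≠ a') (hfar : 2 * ‖a - a'‖ ≤ ‖a' - b‖) :
    |⟪rieszKernel (n + 1) (Z a - Z b) - rieszKernel (n + 1) (Z a' - Z b), T a - T b⟫| ≤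
      2 * (n + 2) * (c / 2)⁻¹ ^ (n + 1) * L * K * ‖a - a'‖ * ‖a' - b‖ ^ (γ - 1 - n) := by
  have hρ : 0 < ‖a' - b‖ := by linarith [norm_sub_pos_iff.2 haa']
  have hlower : ‖a' - b‖ ≤ ‖a - b‖ + ‖a - a'‖ := by
    simpa only [sub_sub_sub_cancel_left] using norm_sub_le (a - b) (a - a')
  have hupper : ‖a - b‖ ≤ ‖a - a'‖ + ‖a' - b‖ := norm_sub_le_norm_sub_add_norm_sub a a' b
  have hdiff := norm_rieszKernel_sub_le (n + 1) (u := Z a - Z b) (v := Z a' - Z b)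
    (mul_pos (half_pos hc) hρ) (by nlinarith) (by nlinarith)
  rw [sub_sub_sub_cancel_right] at hdiff
  have hTρ : ‖T a - T b‖ ≤ K * (2 * ‖a' - b‖ ^ γ) :=
    hT.trans (by gcongr; exact rpow_le_two_mul_rpow (norm_nonneg _) (by linarith) hγ)
  calc |⟪rieszKernel (n + 1) (Z a - Z b) - rieszKernel (n + 1) (Z a' - Z b), T a - T b⟫|
      ≤ ‖rieszKernel (n + 1) (Z a - Z b) - rieszKernel (n + 1) (Z a' - Z b)‖ * ‖T a - T b‖ :=
        abs_real_inner_le_norm _ _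
    _ ≤ ((n + 1 : ℕ) + 1) * (c / 2 * ‖a' - b‖)⁻¹ ^ (n + 1) * (L * ‖a - a'‖) *
          (K * (2 * ‖a' - b‖ ^ γ)) := by
        gcongr
        · exact mul_nonneg (by positivity) ((norm_nonneg _).trans hZ)
        · exact hdiff.trans (by gcongr)
    _ = 2 * (n + 2) * L * K * ‖a - a'‖ *
          ((c / 2 * ‖a' - b‖)⁻¹ ^ (n + 1) * ‖a' - b‖ ^ γ) := by push_cast; ring
    _ = 2 * (n + 2) * (c / 2)⁻¹ ^ (n + 1) * L * K * ‖a - a'‖ * ‖a' - b‖ ^ (γ - 1 - n) := by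
        rw [inv_mul_pow_mul_rpow hρ, show γ - (n + 1 : ℕ) = γ - 1 - n by push_cast; ring]
        ring

lemma abs_commutatorKernel_mul_le [NormedSpace ℝ E] {H F : ℝ} {Ω : Set E} {f : E → ℝ}
    (hc : 0 < c) (hK : 0 ≤ K) (hZ : IsHolderChartOn c L H γ Ω Z) (hT : HolderBoundOn K γ Ω T)
    (hfF : ∀ b ∈ Ω, |f b| ≤ F) (ha : a ∈ Ω) (hb : b ∈ Ω) :
    |commutatorKernel (n + 1) Z T a b * f b| ≤ c⁻¹ ^ n * K * F * ‖a - b‖ ^ (γ - n) := by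
  rw [abs_mul, mul_right_comm]
  gcongr
  exacts [abs_commutatorKernel_le hc hK (hZ.le_norm_sub a ha b hb) (hT a ha b hb), hfF b hb]

end CommutatorKernel

section Integrals

lemma aestronglyMeasurable_inner_rieszKernel {X V : Type*} [MeasurableSpace X]
    [NormedAddCommGroup V] [InnerProductSpace ℝ V] {ν : Measure X} {Φ Ψ : X → V} (d : ℕ)
    (hΦ : AEStronglyMeasurable Φ ν) (hΨ : AEStronglyMeasurable Ψ ν) :
    AEStronglyMeasurable (fun b => ⟪rieszKernel d (Φ b), Ψ b⟫) ν :=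
  ((hΦ.norm.aemeasurable.inv.pow_const d).aestronglyMeasurable.smul hΦ).inner hΨ

variable {E V : Type*} [NormedAddCommGroup E] [NormedSpace ℝ E] [MeasurableSpace E]
  [NormedAddCommGroup V] [InnerProductSpace ℝ V]
  {n : ℕ} {c L H K F Hf γ : ℝ} {Ω S : Set E} {Z T : E → V} {f : E → ℝ} {a a' : E}

lemma abs_setIntegral_inner_rieszKernel_mul_le_measureReal {ν : Measure E} {ρ : ℝ} (hc : 0 < c)
    (hF : 0 ≤ F) (hρ : 0 < ρ) (hνΩ : ν Ω ≠ ⊤) (hZ : IsHolderChartOn c L H γ Ω Z)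
    (hfF : ∀ b ∈ Ω, |f b| ≤ F) (ha : a ∈ Ω) (hSΩ : S ⊆ Ω) (hSρ : S ⊆ (ball a ρ)ᶜ) (w : V) :
    |∫ b in S, ⟪rieszKernel (n + 1) (Z a - Z b), w⟫ * f b ∂ν| ≤
      (c * ρ)⁻¹ ^ n * ‖w‖ * F * ν.real Ω := by
  rw [← Real.norm_eq_abs]
  refine (norm_setIntegral_le_of_norm_le_const (C := (c * ρ)⁻¹ ^ n * ‖w‖ * F)
    ((measure_mono hSΩ).trans_lt hνΩ.lt_top) fun b hb => ?_).trans
    (by gcongr)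
  have hρb : ρ ≤ ‖a - b‖ := by simpa [dist_eq_norm'] using hSρ hb
  rw [norm_mul, Real.norm_eq_abs]
  gcongr
  · exact abs_inner_rieszKernel_succ_le n (mul_pos hc hρ)
      ((by gcongr : c * ρ ≤ c * ‖a - b‖).trans (hZ.le_norm_sub a ha b (hSΩ hb))) w
  · exact hfF b (hSΩ hb)

variable [FiniteDimensional ℝ E] [BorelSpace E]

lemma integrableOn_inner_rieszKernel_mul {ν : Measure E} {Φ : E → V} {m : ℝ} (hm : 0 < m)
    (hS : MeasurableSet S) (hνS : ν S ≠ ⊤) (hΦ : ContinuousOn Φ S) (hmΦ : ∀ b ∈ S, m ≤ ‖Φ b‖)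
    (hf : ContinuousOn f S) (hfF : ∀ b ∈ S, |f b| ≤ F) (w : V) :
    IntegrableOn (fun b => ⟪rieszKernel (n + 1) (Φ b), w⟫ * f b) S ν := by
  refine .of_bound hνS.lt_top ((aestronglyMeasurable_inner_rieszKernel _
    (hΦ.aestronglyMeasurable hS) aestronglyMeasurable_const).mul (hf.aestronglyMeasurable hS))
    (m⁻¹ ^ n * ‖w‖ * F) (ae_restrict_of_forall_mem hS fun b hb => ?_)
  rw [norm_mul, Real.norm_eq_abs]
  gcongr
  exacts [abs_inner_rieszKernel_succ_le n hm (hmΦ b hb) w, hfF b hb]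

lemma integrableOn_diff_ball_inner_rieszKernel_mul {ν : Measure E} {s : ℝ} (hγ : 0 < γ)
    (hc : 0 < c) (hs : 0 < s) (hΩ : MeasurableSet Ω) (hνΩ : ν Ω ≠ ⊤)
    (hZ : IsHolderChartOn c L H γ Ω Z) (hf : HolderBoundOn Hf γ Ω f) (hfF : ∀ b ∈ Ω, |f b| ≤ F)
    (ha : a ∈ Ω) (w : V) :
    IntegrableOn (fun b => ⟪rieszKernel (n + 1) (Z a - Z b), w⟫ * f b) (Ω \ ball a s) ν :=
  integrableOn_inner_rieszKernel_mul (mul_pos hc hs) (hΩ.diff measurableSet_ball)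
    (measure_ne_top_of_subset sdiff_subset hνΩ)
    (continuousOn_const.sub (hZ.continuousOn.mono sdiff_subset))
    (fun b hb => (by gcongr; simpa [dist_eq_norm'] using hb.2 : c * s ≤ c * ‖a - b‖).trans
      (hZ.le_norm_sub a ha b hb.1))
    ((hf.continuousOn hγ).mono sdiff_subset) (fun b hb => hfF b hb.1) w

variable [Nontrivial E] (ν : Measure E) [ν.IsAddHaarMeasure]

lemma integrableOn_commutatorKernel_mul (hn : Module.finrank ℝ E = n) (hγ : 0 < γ) (hc : 0 < c)
    (hK : 0 ≤ K) (hΩ : MeasurableSet Ω) {R : ℝ} (hR : 0 < R) (hΩR : Ω ⊆ ball a R)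
    (hZ : IsHolderChartOn c L H γ Ω Z) (hT : HolderBoundOn K γ Ω T) (hf : ContinuousOn f Ω)
    (hfF : ∀ b ∈ Ω, |f b| ≤ F) (ha : a ∈ Ω) :
    IntegrableOn (fun b => commutatorKernel (n + 1) Z T a b * f b) Ω ν := by
  refine (((integrableOn_ball_norm_sub_rpow ν hn hγ hR a).mono_set hΩR).const_mul
    (c⁻¹ ^ n * K * F)).mono' ?_ (ae_restrict_of_forall_mem hΩ fun b hb =>
      abs_commutatorKernel_mul_le hc hK hZ hT hfF ha hb)
  exact (aestronglyMeasurable_inner_rieszKernel _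
    (aestronglyMeasurable_const.sub (hZ.continuousOn.aestronglyMeasurable hΩ))
    (aestronglyMeasurable_const.sub ((hT.continuousOn hγ).aestronglyMeasurable hΩ))).mul
    (hf.aestronglyMeasurable hΩ)

lemma abs_setIntegral_commutatorKernel_mul_le (hn : Module.finrank ℝ E = n) (hγ : 0 < γ)
    (hc : 0 < c) (hK : 0 ≤ K) (hF : 0 ≤ F) (hZ : IsHolderChartOn c L H γ Ω Z)
    (hT : HolderBoundOn K γ Ω T) (hfF : ∀ b ∈ Ω, |f b| ≤ F) (ha : a ∈ Ω) (hS : MeasurableSet S)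
    (hSΩ : S ⊆ Ω) {R : ℝ} (hR : 0 < R) (hSR : S ⊆ ball a R) :
    |∫ b in S, commutatorKernel (n + 1) Z T a b * f b ∂ν| ≤
      c⁻¹ ^ n * K * F * (ν.toSphere.real univ * (R ^ γ / γ)) := by
  rw [← Real.norm_eq_abs]
  exact norm_setIntegral_le_of_norm_le_rpow_of_subset_ball ν hn hγ (by positivity) hR hS hSR
    fun _ hb => abs_commutatorKernel_mul_le hc hK hZ hT hfF ha (hSΩ hb)

lemma abs_setIntegral_inner_rieszKernel_sub_mul_le (hn : Module.finrank ℝ E = n)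
    (hγ : γ ∈ Ioo (0 : ℝ) 1) (hc : 0 < c) (hL : 0 ≤ L) (hK : 0 ≤ K) (hF : 0 ≤ F)
    (hZ : IsHolderChartOn c L H γ Ω Z) (hT : HolderBoundOn K γ Ω T) (hfF : ∀ b ∈ Ω, |f b| ≤ F)
    (ha : a ∈ Ω) (ha' : a' ∈ Ω) (haa' : a ≠ a') (hΩ : MeasurableSet Ω) :
    |∫ b in Ω \ ball a' (2 * ‖a - a'‖),
        ⟪rieszKernel (n + 1) (Z a - Z b) - rieszKernel (n + 1) (Z a' - Z b), T a - T b⟫ * f b ∂ν| ≤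
      2 * (n + 2) * (c / 2)⁻¹ ^ (n + 1) * L * (ν.toSphere.real univ * (2 ^ (γ - 1) / (1 - γ))) *
        (K * F * ‖a - a'‖ ^ γ) := by
  have hδ : 0 < ‖a - a'‖ := norm_sub_pos_iff.2 haa'
  rw [← Real.norm_eq_abs]
  refine (norm_setIntegral_le_of_norm_le_rpow_of_subset_compl_ball ν hn (sub_neg.2 hγ.2)
    (M := 2 * (n + 2) * (c / 2)⁻¹ ^ (n + 1) * L * K * ‖a - a'‖ * F) (by positivity)
    (mul_pos two_pos hδ) (hΩ.diff measurableSet_ball) (fun b hb => hb.2)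
    fun b hb => ?_).trans_eq ?_
  · rw [norm_mul, Real.norm_eq_abs, mul_right_comm]
    gcongr
    · exact abs_inner_rieszKernel_sub_le hc hK (Ioo_subset_Icc_self hγ) (hZ.le_norm_sub a ha b hb.1)
        (hZ.le_norm_sub a' ha' b hb.1) (hZ.norm_sub_le a ha a' ha') (hT a ha b hb.1) haa'
        (by simpa [dist_eq_norm'] using hb.2)
    · exact hfF b hb.1
  · have hpow : ‖a - a'‖ ^ γ = ‖a - a'‖ * ‖a - a'‖ ^ (γ - 1) := by
      rw [← Real.rpow_one_add' hδ.le (by linarith [hγ.1]), add_sub_cancel]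
    rw [Real.mul_rpow zero_le_two hδ.le, neg_sub, hpow]
    ring

end Integrals

section Cancellation

lemma setIntegral_commutatorKernel_mul_sub {X V : Type*} [MeasurableSpace X] {ν : Measure X}
    [NormedAddCommGroup V] [InnerProductSpace ℝ V] {d : ℕ} {Z T : X → V} {f : X → ℝ} {Ω D : Set X}
    {a a' : X} (hD : MeasurableSet D)
    (ha : IntegrableOn (fun b => commutatorKernel d Z T a b * f b) Ω ν)
    (ha' : IntegrableOn (fun b => commutatorKernel d Z T a' b * f b) Ω ν)
    (hfar : IntegrableOn (fun b => ⟪rieszKernel d (Z a' - Z b), T a - T a'⟫ * f b) (Ω \ D) ν) :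
    ∫ b in Ω, commutatorKernel d Z T a b * f b ∂ν -
        ∫ b in Ω, commutatorKernel d Z T a' b * f b ∂ν =
      (∫ b in Ω ∩ D, commutatorKernel d Z T a b * f b ∂ν -
        ∫ b in Ω ∩ D, commutatorKernel d Z T a' b * f b ∂ν) +
      ∫ b in Ω \ D,
        ⟪rieszKernel d (Z a - Z b) - rieszKernel d (Z a' - Z b), T a - T b⟫ * f b ∂ν +
      ∫ b in Ω \ D, ⟪rieszKernel d (Z a' - Z b), T a - T a'⟫ * f b ∂ν := by
  have hsplit : (fun b =>
      ⟪rieszKernel d (Z a - Z b) - rieszKernel d (Z a' - Z b), T a - T b⟫ * f b) = fun b =>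
      commutatorKernel d Z T a b * f b - commutatorKernel d Z T a' b * f b -
        ⟪rieszKernel d (Z a' - Z b), T a - T a'⟫ * f b := by
    ext b
    linear_combination -f b * commutatorKernel_sub_commutatorKernel d Z T a a' b
  have ha_far := ha.mono_set (sdiff_subset (t := D))
  have ha'_far := ha'.mono_set (sdiff_subset (t := D))
  have hsub : IntegrableOn (fun b => commutatorKernel d Z T a b * f b -
      commutatorKernel d Z T a' b * f b) (Ω \ D) ν := ha_far.sub ha'_far
  rw [hsplit, integral_sub hsub hfar, integral_sub ha_far ha'_far,
    ← integral_inter_add_sdiff hD ha, ← integral_inter_add_sdiff hD ha']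
  ring

variable {E V : Type*} [NormedAddCommGroup E] [NormedSpace ℝ E] [FiniteDimensional ℝ E]
  [MeasurableSpace E] [BorelSpace E] [Nontrivial E] [NormedAddCommGroup V] [InnerProductSpace ℝ V]
  (ν : Measure E) [ν.IsAddHaarMeasure]
  {n : ℕ} {c L H F Hf γ ρ s : ℝ} {Ω : Set E} {Z : E → V} {f : E → ℝ} {a : E}

lemma abs_setIntegral_annulus_inner_rieszKernel_mul_le (hn : Module.finrank ℝ E = n) (hγ : 0 < γ)
    (hc : 0 < c) (hH : 0 ≤ H) (hF : 0 ≤ F) (hHf : 0 ≤ Hf) (hρ : 0 < ρ) (hs : 0 < s)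
    (hZ : IsHolderChartOn c L H γ (ball a ρ) Z) (hfF : ∀ b ∈ ball a ρ, |f b| ≤ F)
    (hfH : HolderBoundOn Hf γ (ball a ρ) f) (w : V) :
    |∫ b in ball a ρ \ ball a s, ⟪rieszKernel (n + 1) (Z a - Z b), w⟫ * f b ∂ν| ≤
      (c⁻¹ ^ n * Hf + (n + 2) * c⁻¹ ^ (n + 1) * H * F) * ‖w‖ *
        (ν.toSphere.real univ * (ρ ^ γ / γ)) := by
  have ha : a ∈ ball a ρ := mem_ball_self hρ
  have hsb : ∀ b ∈ ball a ρ \ ball a s, s ≤ ‖a - b‖ := fun b hb => by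
    simpa [dist_eq_norm'] using hb.2
  have hlin : ∫ b in ball a ρ \ ball a s,
      ⟪rieszKernel (n + 1) (fderiv ℝ Z a (a - b)), w⟫ * f a ∂ν = 0 :=
    setIntegral_annulus_eq_zero_of_odd ν
      (g := fun x => ⟪rieszKernel (n + 1) (fderiv ℝ Z a x), w⟫ * f a)
      (fun x => by simp only [map_neg, rieszKernel_neg, inner_neg_left, neg_mul]) a s ρ
  have hint_lin : IntegrableOn (fun b => ⟪rieszKernel (n + 1) (fderiv ℝ Z a (a - b)), w⟫ * f a)
      (ball a ρ \ ball a s) ν :=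
    integrableOn_inner_rieszKernel_mul (mul_pos hc hs)
      (measurableSet_ball.diff measurableSet_ball)
      (measure_ne_top_of_subset sdiff_subset measure_ball_lt_top.ne) (by fun_prop)
      (fun b hb => (by gcongr; exact hsb b hb : c * s ≤ c * ‖a - b‖).trans
        (hZ.le_norm_fderiv isOpen_ball ha _)) continuousOn_const (fun _ _ => hfF a ha) w
  rw [← sub_zero (∫ b in _, _ ∂ν), ← hlin, ← integral_sub
    (integrableOn_diff_ball_inner_rieszKernel_mul hγ hc hs measurableSet_ball
      measure_ball_lt_top.ne hZ hfH hfF ha w) hint_lin, ← Real.norm_eq_abs]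
  refine norm_setIntegral_le_of_norm_le_rpow_of_subset_ball ν hn hγ (by positivity) hρ
    (measurableSet_ball.diff measurableSet_ball) sdiff_subset fun b hb => ?_
  rw [mul_comm _ (f b), mul_comm _ (f a), ← real_inner_smul_left, ← real_inner_smul_left,
    ← inner_sub_left, mul_right_comm]
  refine (norm_inner_le_norm _ _).trans ?_
  gcongr
  refine norm_smul_rieszKernel_sub_smul_le hc (hs.trans_le (hsb b hb))
    (hZ.le_norm_sub a ha b hb.1) (hZ.le_norm_fderiv isOpen_ball ha _)
    (hZ.norm_sub_sub_fderiv_le (convex_ball a ρ) hγ.le hH ha hb.1) ?_ (hfF a ha)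
  rw [norm_sub_rev]
  exact hfH b hb.1 a ha

lemma abs_setIntegral_diff_ball_inner_rieszKernel_mul_le (hn : Module.finrank ℝ E = n)
    (hγ : 0 < γ) (hc : 0 < c) (hH : 0 ≤ H) (hF : 0 ≤ F) (hρ : 0 < ρ) (hs : 0 < s)
    (hΩ : MeasurableSet Ω) (hνΩ : ν Ω ≠ ⊤) (hZ : IsHolderChartOn c L H γ Ω Z)
    (hfF : ∀ b ∈ Ω, |f b| ≤ F) (hfH : HolderBoundOn F γ Ω f) (hρΩ : ball a ρ ⊆ Ω) (w : V) :
    |∫ b in Ω \ ball a s, ⟪rieszKernel (n + 1) (Z a - Z b), w⟫ * f b ∂ν| ≤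
      ((c⁻¹ ^ n + (n + 2) * c⁻¹ ^ (n + 1) * H) * (ν.toSphere.real univ * (ρ ^ γ / γ)) +
        (c * ρ)⁻¹ ^ n * ν.real Ω) * (F * ‖w‖) := by
  have ha : a ∈ Ω := hρΩ (mem_ball_self hρ)
  have hinner := abs_setIntegral_annulus_inner_rieszKernel_mul_le ν hn hγ hc hH hF hF hρ hs
    (hZ.mono hρΩ) (fun b hb => hfF b (hρΩ hb)) (hfH.mono hρΩ) w
  have houter := abs_setIntegral_inner_rieszKernel_mul_le_measureReal (n := n) hc hF hρ hνΩ hZ hfF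
    ha (S := (Ω \ ball a s) \ ball a ρ) (sdiff_subset.trans sdiff_subset) (fun b hb => hb.2) w
  rw [← integral_inter_add_sdiff (measurableSet_ball (x := a) (ε := ρ))
      (integrableOn_diff_ball_inner_rieszKernel_mul hγ hc hs hΩ hνΩ hZ hfH hfF ha w),
    ← inter_sdiff_right_comm, inter_eq_right.2 hρΩ]
  refine (abs_add_le _ _).trans <| (add_le_add hinner houter).trans_eq ?_
  ring

end Cancellation

section HolderBound

/-- The Hölder constant of the integral operator with kernel `commutatorKernel (n + 1) Z T` on a
domain of volume `m`, at points at distance at least `ρ` from its boundary, for a chart with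
constants `c`, `L`, `H`; `σ` stands for the area of the unit sphere. Its three summands bound the
near part, the difference of the kernels and the truncated singular integral. -/
noncomputable def commutatorHolderConst (n : ℕ) (c L H γ ρ σ m : ℝ) : ℝ :=
  c⁻¹ ^ n * (σ * ((3 ^ γ + 2 ^ γ) / γ)) +
    2 * (n + 2) * (c / 2)⁻¹ ^ (n + 1) * L * (σ * (2 ^ (γ - 1) / (1 - γ))) +
    ((c⁻¹ ^ n + (n + 2) * c⁻¹ ^ (n + 1) * H) * (σ * (ρ ^ γ / γ)) + (c * ρ)⁻¹ ^ n * m)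

variable {E V : Type*} [NormedAddCommGroup E] [NormedSpace ℝ E] [FiniteDimensional ℝ E]
  [MeasurableSpace E] [BorelSpace E] [Nontrivial E] [NormedAddCommGroup V] [InnerProductSpace ℝ V]
  (ν : Measure E) [ν.IsAddHaarMeasure]
  {n : ℕ} {c L H K F γ ρ R : ℝ} {Ω : Set E} {Z T : E → V} {f : E → ℝ} {a a' : E}

lemma abs_setIntegral_inter_ball_commutatorKernel_mul_sub_le (hn : Module.finrank ℝ E = n)
    (hγ : 0 < γ) (hc : 0 < c) (hK : 0 ≤ K) (hF : 0 ≤ F) (hΩ : MeasurableSet Ω)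
    (hZ : IsHolderChartOn c L H γ Ω Z) (hT : HolderBoundOn K γ Ω T) (hfF : ∀ b ∈ Ω, |f b| ≤ F)
    (ha : a ∈ Ω) (ha' : a' ∈ Ω) (haa' : a ≠ a') :
    |∫ b in Ω ∩ ball a' (2 * ‖a - a'‖), commutatorKernel (n + 1) Z T a b * f b ∂ν -
        ∫ b in Ω ∩ ball a' (2 * ‖a - a'‖), commutatorKernel (n + 1) Z T a' b * f b ∂ν| ≤
      c⁻¹ ^ n * (ν.toSphere.real univ * ((3 ^ γ + 2 ^ γ) / γ)) * (K * F * ‖a - a'‖ ^ γ) := by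
  have hδ : 0 < ‖a - a'‖ := norm_sub_pos_iff.2 haa'
  set D : Set E := ball a' (2 * ‖a - a'‖)
  have hD : MeasurableSet (Ω ∩ D) := hΩ.inter measurableSet_ball
  have hD_sub : Ω ∩ D ⊆ ball a (3 * ‖a - a'‖) := inter_subset_right.trans <|
    ball_subset_ball' <| by rw [dist_eq_norm']; linarith
  refine (abs_sub _ _).trans <| (add_le_add
    (abs_setIntegral_commutatorKernel_mul_le ν hn hγ hc hK hF hZ hT hfF ha hD inter_subset_left
      (mul_pos three_pos hδ) hD_sub)
    (abs_setIntegral_commutatorKernel_mul_le ν hn hγ hc hK hF hZ hT hfF ha' hD inter_subset_left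
      (mul_pos two_pos hδ) inter_subset_right)).trans_eq ?_
  rw [Real.mul_rpow zero_le_three hδ.le, Real.mul_rpow zero_le_two hδ.le]
  ring

lemma abs_setIntegral_commutatorKernel_mul_sub_le (hn : Module.finrank ℝ E = n)
    (hγ : γ ∈ Ioo (0 : ℝ) 1) (hc : 0 < c) (hL : 0 ≤ L) (hH : 0 ≤ H) (hK : 0 ≤ K) (hR : 0 < R)
    (hρ : 0 < ρ) (hΩ : MeasurableSet Ω) (hZ : IsHolderChartOn c L H γ Ω Z)
    (hT : HolderBoundOn K γ Ω T) (hfF : ∀ b ∈ Ω, |f b| ≤ F) (hfH : HolderBoundOn F γ Ω f)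
    (ha : a ∈ Ω) (haa' : a ≠ a') (haR : Ω ⊆ ball a R) (haR' : Ω ⊆ ball a' R)
    (hρΩ : ball a' ρ ⊆ Ω) :
    |∫ b in Ω, commutatorKernel (n + 1) Z T a b * f b ∂ν -
        ∫ b in Ω, commutatorKernel (n + 1) Z T a' b * f b ∂ν| ≤
      commutatorHolderConst n c L H γ ρ (ν.toSphere.real univ) (ν.real Ω) *
        (K * F * ‖a - a'‖ ^ γ) := by
  have hδ : 0 < 2 * ‖a - a'‖ := mul_pos two_pos (norm_sub_pos_iff.2 haa')
  have ha' : a' ∈ Ω := hρΩ (mem_ball_self hρ)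
  have hF : 0 ≤ F := (abs_nonneg _).trans (hfF a ha)
  have hγ0 : 0 < γ := hγ.1
  have hνΩ : ν Ω ≠ ⊤ := measure_ne_top_of_subset haR measure_ball_lt_top.ne
  have hf := hfH.continuousOn hγ0
  rw [setIntegral_commutatorKernel_mul_sub (measurableSet_ball (x := a') (ε := 2 * ‖a - a'‖))
    (integrableOn_commutatorKernel_mul ν hn hγ0 hc hK hΩ hR haR hZ hT hf hfF ha)
    (integrableOn_commutatorKernel_mul ν hn hγ0 hc hK hΩ hR haR' hZ hT hf hfF ha')
    (integrableOn_diff_ball_inner_rieszKernel_mul hγ0 hc hδ hΩ hνΩ hZ hfH hfF ha' _),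
    commutatorHolderConst, add_mul, add_mul]
  refine (abs_add_three _ _ _).trans (add_le_add_three
    (abs_setIntegral_inter_ball_commutatorKernel_mul_sub_le ν hn hγ0 hc hK hF hΩ hZ hT hfF ha ha'
      haa')
    (abs_setIntegral_inner_rieszKernel_sub_mul_le ν hn hγ hc hL hK hF hZ hT hfF ha ha' haa' hΩ)
    ((abs_setIntegral_diff_ball_inner_rieszKernel_mul_le ν hn hγ0 hc hH hF hρ hδ hΩ hνΩ hZ hfF hfH
      hρΩ (T a - T a')).trans ?_))
  rw [mul_comm K F, mul_assoc F K]
  gcongr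
  exact hT a ha a' ha'

lemma abs_setIntegral_ball_commutatorKernel_mul_sub_le {a₀ : E} {r Hf : ℝ}
    (hn : Module.finrank ℝ E = n) (hγ : γ ∈ Ioo (0 : ℝ) 1) (hc : 0 < c) (hL : 0 ≤ L) (hH : 0 ≤ H)
    (hK : 0 ≤ K) (hrR : r < R) (hZ : IsHolderChartOn c L H γ (ball a₀ R) Z)
    (hT : HolderBoundOn K γ (ball a₀ R) T) (hfF : ∀ b ∈ ball a₀ R, |f b| ≤ F)
    (hfH : HolderBoundOn Hf γ (ball a₀ R) f) (ha : a ∈ ball a₀ r) (ha' : a' ∈ ball a₀ r) :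
    |∫ b in ball a₀ R, commutatorKernel (n + 1) Z T a b * f b ∂ν -
        ∫ b in ball a₀ R, commutatorKernel (n + 1) Z T a' b * f b ∂ν| ≤
      commutatorHolderConst n c L H γ (R - r) (ν.toSphere.real univ) (ν.real (ball 0 R)) *
        (K * (F + Hf) * ‖a - a'‖ ^ γ) := by
  rcases eq_or_ne a a' with rfl | haa'
  · rw [sub_self, sub_self, norm_zero, abs_zero, Real.zero_rpow hγ.1.ne', mul_zero, mul_zero]
  have hr : ball a₀ r ⊆ ball a₀ R := ball_subset_ball hrR.le
  have hR : 0 < R := pos_of_mem_ball (hr ha)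
  have hF : 0 ≤ F := (abs_nonneg _).trans (hfF a (hr ha))
  have hHf : 0 ≤ Hf := nonneg_of_mul_nonneg_left
    ((norm_nonneg _).trans (hfH a (hr ha) a' (hr ha')))
    (Real.rpow_pos_of_pos (norm_sub_pos_iff.2 haa') γ)
  have hcover : ∀ x ∈ ball a₀ r, ball a₀ R ⊆ ball x (2 * R) := fun x hx =>
    ball_subset_ball' (by linarith [mem_ball'.1 hx])
  rw [← Measure.addHaar_real_ball_center ν a₀]
  exact abs_setIntegral_commutatorKernel_mul_sub_le ν hn hγ hc hL hH hK (F := F + Hf)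
    (mul_pos two_pos hR) (sub_pos.2 hrR) measurableSet_ball hZ hT
    (fun b hb => (hfF b hb).trans (le_add_of_nonneg_right hHf))
    (fun x hx y hy => (hfH x hx y hy).trans (by gcongr; exact le_add_of_nonneg_left hF)) (hr ha)
    haa' (hcover a ha) (hcover a' ha') (ball_subset_ball' (by linarith [mem_ball.1 ha']))

end HolderBound

section GeneralBound

variable {E V : Type*} [NormedAddCommGroup E] [NormedSpace ℝ E] [FiniteDimensional ℝ E]
  [MeasurableSpace E] [BorelSpace E] [Nontrivial E] [NormedAddCommGroup V] [InnerProductSpace ℝ V]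
  (ν : Measure E) [ν.IsAddHaarMeasure] {c L H γ r R : ℝ}

theorem chart_commutator_holder_bound_general {d : ℕ} (hd : Module.finrank ℝ E + 1 = d)
    (hγ : γ ∈ Ioo (0 : ℝ) 1) (hc : 0 < c) (hL : 0 ≤ L) (hH : 0 ≤ H) (hrR : r < R) :
    ∃ C₀ : ℝ, ∀ (a₀ : E) (Z : E → V), IsHolderChartOn c L H γ (ball a₀ R) Z →
      ∀ (v : E) (f : E → ℝ) (F Hf : ℝ),
        (∀ b ∈ ball a₀ R, |f b| ≤ F) → HolderBoundOn Hf γ (ball a₀ R) f →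
        (∀ a ∈ ball a₀ r, IntegrableOn
          (fun b => ((2 - (d : ℝ)) * ⟪Z a - Z b, fderiv ℝ Z a v - fderiv ℝ Z b v⟫ /
            ‖Z a - Z b‖ ^ d) * f b) (ball a₀ R) ν) ∧
        ∀ a ∈ ball a₀ r, ∀ a' ∈ ball a₀ r,
          |(∫ b in ball a₀ R, ((2 - (d : ℝ)) * ⟪Z a - Z b, fderiv ℝ Z a v - fderiv ℝ Z b v⟫ /
              ‖Z a - Z b‖ ^ d) * f b ∂ν) -
            ∫ b in ball a₀ R, ((2 - (d : ℝ)) * ⟪Z a' - Z b, fderiv ℝ Z a' v - fderiv ℝ Z b v⟫ /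
              ‖Z a' - Z b‖ ^ d) * f b ∂ν| ≤ C₀ * ‖v‖ * (F + Hf) * ‖a - a'‖ ^ γ := by
  subst hd
  set n := Module.finrank ℝ E with hn
  refine ⟨|2 - ((n + 1 : ℕ) : ℝ)| * (commutatorHolderConst n c L H γ (R - r)
    (ν.toSphere.real univ) (ν.real (ball 0 R)) * H), fun a₀ Z hZ v f F Hf hfF hfH => ?_⟩
  have hT := hZ.holderBoundOn_fderiv_apply v
  have hK : 0 ≤ H * ‖v‖ := mul_nonneg hH (norm_nonneg v)
  simp only [two_sub_mul_inner_div_norm_pow_mul _ Z (fun a => fderiv ℝ Z a v), integral_const_mul,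
    ← mul_sub, abs_mul]
  refine ⟨fun a ha => ?_, fun a ha a' ha' => ?_⟩
  · have haR : a ∈ ball a₀ R := ball_subset_ball hrR.le ha
    exact (integrableOn_commutatorKernel_mul ν hn.symm hγ.1 hc hK measurableSet_ball
      (mul_pos two_pos (pos_of_mem_ball haR))
      (ball_subset_ball' (by linarith [mem_ball'.1 ha])) hZ hT (hfH.continuousOn hγ.1) hfF
      haR).const_mul _
  · refine (mul_le_mul_of_nonneg_left (abs_setIntegral_ball_commutatorKernel_mul_sub_le ν hn.symm hγ
      hc hL hH hK hrR hZ hT hfF hfH ha ha') (abs_nonneg _)).trans_eq ?_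
    ring

end GeneralBound

/-- Hölder bound for the chart commutator operator. -/
theorem chart_commutator_holder_bound
    (d : ℕ) (hd : 3 ≤ d) (γ : ℝ) (hγ : γ ∈ Set.Ioo (0:ℝ) 1)
    (μ L H r₀ : ℝ) (hμ : 1 ≤ μ) (hL : 0 < L) (hH : 0 < H) (hr₀ : 0 < r₀) :
    ∃ C₀ : ℝ, ∀ (a₀ : EuclideanSpace ℝ (Fin (d - 1)))
      (Z : EuclideanSpace ℝ (Fin (d - 1)) → EuclideanSpace ℝ (Fin d)),
      (∀ a ∈ Metric.ball a₀ (6 * r₀), DifferentiableAt ℝ Z a) →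
      (∀ a ∈ Metric.ball a₀ (6 * r₀), ∀ b ∈ Metric.ball a₀ (6 * r₀),
        μ⁻¹ * ‖a - b‖ ≤ ‖Z a - Z b‖ ∧ ‖Z a - Z b‖ ≤ L * ‖a - b‖) →
      (∀ a ∈ Metric.ball a₀ (6 * r₀), ∀ b ∈ Metric.ball a₀ (6 * r₀),
        ‖fderiv ℝ Z a - fderiv ℝ Z b‖ ≤ H * ‖a - b‖ ^ γ) →
      ∀ j : Fin (d - 1),
      ∀ (f : EuclideanSpace ℝ (Fin (d - 1)) → ℝ) (F Hf : ℝ),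
        Function.support f ⊆ Metric.ball a₀ (3 * r₀) →
        (∀ b, |f b| ≤ F) →
        (∀ b b', |f b - f b'| ≤ Hf * ‖b - b'‖ ^ γ) →
        (∀ a ∈ Metric.ball a₀ (3 * r₀),
          IntegrableOn
            (fun b =>
              ((2 - (d:ℝ)) * ⟪Z a - Z b,
                  fderiv ℝ Z a (EuclideanSpace.single j 1)
                    - fderiv ℝ Z b (EuclideanSpace.single j 1)⟫
                / ‖Z a - Z b‖ ^ d) * f b)
            (Metric.ball a₀ (6 * r₀)) volume) ∧
        (∀ a ∈ Metric.ball a₀ (3 * r₀), ∀ a' ∈ Metric.ball a₀ (3 * r₀),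
          |(∫ b in Metric.ball a₀ (6 * r₀),
              ((2 - (d:ℝ)) * ⟪Z a - Z b,
                  fderiv ℝ Z a (EuclideanSpace.single j 1)
                    - fderiv ℝ Z b (EuclideanSpace.single j 1)⟫
                / ‖Z a - Z b‖ ^ d) * f b) -
            ∫ b in Metric.ball a₀ (6 * r₀),
              ((2 - (d:ℝ)) * ⟪Z a' - Z b,
                  fderiv ℝ Z a' (EuclideanSpace.single j 1)
                    - fderiv ℝ Z b (EuclideanSpace.single j 1)⟫
                / ‖Z a' - Z b‖ ^ d) * f b|
            ≤ C₀ * (F + Hf) * ‖a - a'‖ ^ γ) := by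
  have hdim : Module.finrank ℝ (EuclideanSpace ℝ (Fin (d - 1))) + 1 = d := by
    rw [finrank_euclideanSpace_fin]; omega
  have : Nonempty (Fin (d - 1)) := ⟨⟨0, by omega⟩⟩
  obtain ⟨C₀, hC₀⟩ := chart_commutator_holder_bound_general (V := EuclideanSpace ℝ (Fin d)) volume
    hdim hγ (inv_pos.2 (one_pos.trans_le hμ)) hL.le hH.le (by linarith : 3 * r₀ < 6 * r₀)
  refine ⟨C₀, fun a₀ Z hdiff hlip hholder j f F Hf _ hfF hfH => ?_⟩
  have hZ : IsHolderChartOn μ⁻¹ L H γ (ball a₀ (6 * r₀)) Z :=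
    ⟨hdiff, fun a ha b hb => (hlip a ha b hb).1, fun a ha b hb => (hlip a ha b hb).2, hholder⟩
  simpa only [PiLp.norm_single, norm_one, mul_one] using
    hC₀ a₀ Z hZ (EuclideanSpace.single j 1) f F Hf (fun b _ => hfF b) fun b _ b' _ => hfH b b'
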